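/- arXiv:1912.06069 — 2 statements merged into one kernel-verified Lean document; each statement's English description precedes it below -/
import Mathlib

section
/- Let X be a compact metric space, φ: X → X a homeomorphism and F: X → ℝ continuous. Assume there exists an e^{βF}-conformal measure for φ for some β ≠ 0. Then there exist φ-ergodic, φ-invariant Borel probability measures ν₊ and ν₋ on X such that ∫_X F dν₊ ≥ 0 and ∫_X F dν₋ ≤ 0. Consequently, some convex combination ν of ν₊ and ν₋ is a φ-invariant Borel probability measure with ∫_X F dν = 0. -/
open MeasureTheory Filter Topology
open scoped ENNReal

/-- A Borel probability measure `m` is `e^{βF}`-conformal for the homeomorphism `φ` if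
`∫ f dm = ∫ (f ∘ φ) e^{βF} dm` for every continuous `f : X → ℝ`. -/
def IsConformalMeasure {X : Type*} [TopologicalSpace X] [MeasurableSpace X]
    (φ : X ≃ₜ X) (F : X → ℝ) (β : ℝ) (m : Measure X) : Prop :=
  IsProbabilityMeasure m ∧
    ∀ f : X → ℝ, Continuous f →
      ∫ x, f x ∂m = ∫ x, f (φ x) * Real.exp (β * F x) ∂m

/-- A measure `ν` is `φ`-invariant if `ν(φ⁻¹(B)) = ν(B)` for all Borel sets `B`. -/
def IsInvariantMeasure {X : Type*} [TopologicalSpace X] [MeasurableSpace X]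
    (φ : X ≃ₜ X) (ν : Measure X) : Prop :=
  ∀ B : Set X, MeasurableSet B → ν ((φ : X → X) ⁻¹' B) = ν B

/-- A measure `m` is `φ`-ergodic if every Borel set `B` with `φ⁻¹(B) = B` satisfies
`m(B) = 0` or `m(X \ B) = 0`. -/
def IsErgodicMeasure {X : Type*} [TopologicalSpace X] [MeasurableSpace X]
    (φ : X ≃ₜ X) (m : Measure X) : Prop :=
  ∀ B : Set X, MeasurableSet B → (φ : X → X) ⁻¹' B = B → m B = 0 ∨ m Bᶜ = 0

/-! Iterating the conformality relation gives `∫ exp (β S_n F) dm = 1` for every Birkhoff sum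
`S_n F`, so `β S_n F` takes a nonnegative and a nonpositive value for every `n`. Weak limits of
empirical measures along orbits starting at such points are invariant (Krylov–Bogoliubov) and
integrate `β F` to a number of the corresponding sign. The maximum of the integral of `± β F` over
the compact convex set of invariant probability measures is attained at an extreme point, that is,
at an ergodic measure. -/

open scoped BoundedContinuousFunction

section ExtremePoints

variable {E : Type*} [AddCommGroup E] [Module ℝ E] [TopologicalSpace E] [T2Space E]
  [IsTopologicalAddGroup E] [ContinuousSMul ℝ E] [LocallyConvexSpace ℝ E]

theorem exists_mem_extremePoints_isMaxOn {s : Set E} (hs : IsCompact s) (hne : s.Nonempty)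
    (l : StrongDual ℝ E) : ∃ x ∈ s.extremePoints ℝ, IsMaxOn l s x := by
  have hface : IsExposed ℝ s (l.toExposed s) := ContinuousLinearMap.toExposed.isExposed
  have hface_ne : (l.toExposed s).Nonempty := hs.exists_isMaxOn hne l.continuous.continuousOn
  obtain ⟨x, hx⟩ := (hface.isCompact hs).extremePoints_nonempty hface_ne
  exact ⟨x, hface.isExtreme.extremePoints_subset_extremePoints hx, hx.1.2⟩

end ExtremePoints

section ConvexCombination

variable {X : Type*} [MeasurableSpace X] {μ ν : Measure X}

lemma isProbabilityMeasure_smul_add_smul [IsProbabilityMeasure μ] [IsProbabilityMeasure ν]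
    {a b : ℝ≥0∞} (hab : a + b = 1) : IsProbabilityMeasure (a • μ + b • ν) :=
  ⟨by simp [hab]⟩

lemma integral_smul_add_smul_measure {E : Type*} [NormedAddCommGroup E] [NormedSpace ℝ E]
    {f : X → E} (hμ : Integrable f μ) (hν : Integrable f ν) {a b : ℝ≥0∞} (ha : a ≠ ∞) (hb : b ≠ ∞) :
    ∫ x, f x ∂(a • μ + b • ν) = a.toReal • ∫ x, f x ∂μ + b.toReal • ∫ x, f x ∂ν := by
  rw [integral_add_measure (hμ.smul_measure ha) (hν.smul_measure hb), integral_smul_measure,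
    integral_smul_measure]

lemma exists_integral_smul_add_smul_eq_zero {f : X → ℝ} (hμ : Integrable f μ)
    (hν : Integrable f ν) (hμ_nonneg : 0 ≤ ∫ x, f x ∂μ) (hν_nonpos : ∫ x, f x ∂ν ≤ 0) :
    ∃ t : ℝ≥0∞, t ≤ 1 ∧ ∫ x, f x ∂(t • μ + (1 - t) • ν) = 0 := by
  have hzero : (0 : ℝ) ∈ segment ℝ (∫ x, f x ∂ν) (∫ x, f x ∂μ) := by
    rw [segment_eq_Icc (hν_nonpos.trans hμ_nonneg)]
    exact ⟨hν_nonpos, hμ_nonneg⟩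
  rw [segment_eq_image] at hzero
  obtain ⟨s, ⟨hs_nonneg, hs_le⟩, hs⟩ := hzero
  have ht : ENNReal.ofReal s ≤ 1 := ENNReal.ofReal_le_one.2 hs_le
  refine ⟨ENNReal.ofReal s, ht, ?_⟩
  rw [integral_smul_add_smul_measure hμ hν ENNReal.ofReal_ne_top (by simp),
    ENNReal.toReal_sub_of_le ht ENNReal.one_ne_top, ENNReal.toReal_ofReal hs_nonneg,
    ENNReal.toReal_one, add_comm]
  exact hs

end ConvexCombination

section InvariantMeasures

variable {X : Type*} [TopologicalSpace X] [MeasurableSpace X]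

/-- The `T`-invariant Borel probability measures, as a subset of the space of probability measures
with the topology of weak convergence. -/
def invariantProbabilityMeasures (T : X → X) : Set (ProbabilityMeasure X) :=
  {μ | MeasurePreserving T (μ : Measure X) μ}

/-- A probability measure viewed as a functional on bounded continuous functions. It maps
`ProbabilityMeasure X`, which is not a vector space, into the locally convex space
`(X →ᵇ ℝ) → ℝ`. -/
noncomputable def integralFunctional (μ : ProbabilityMeasure X) : (X →ᵇ ℝ) → ℝ :=
  fun f ↦ ∫ x, f x ∂(μ : Measure X)

lemma continuous_integralFunctional [OpensMeasurableSpace X] :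
    Continuous (integralFunctional (X := X)) :=
  continuous_pi ProbabilityMeasure.continuous_integral_boundedContinuousFunction

lemma mem_invariantProbabilityMeasures_iff_map_eq [BorelSpace X] {T : X → X}
    (hT : Continuous T) {μ : ProbabilityMeasure X} :
    μ ∈ invariantProbabilityMeasures T ↔ μ.map hT.measurable.aemeasurable = μ :=
  ⟨fun h ↦ ProbabilityMeasure.toMeasure_injective h.map_eq,
    fun h ↦ ⟨hT.measurable, congrArg ProbabilityMeasure.toMeasure h⟩⟩

variable [HasOuterApproxClosed X] [BorelSpace X] {T : X → X}

lemma injective_integralFunctional : Function.Injective (integralFunctional (X := X)) :=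
  fun _ _ h ↦ ProbabilityMeasure.toMeasure_injective
    (ext_of_forall_integral_eq_of_IsFiniteMeasure (congrFun h))

lemma isClosed_invariantProbabilityMeasures (hT : Continuous T) :
    IsClosed (invariantProbabilityMeasures T) := by
  convert! isClosed_eq (ProbabilityMeasure.continuous_map hT) continuous_id using 1
  exact Set.ext fun μ ↦ mem_invariantProbabilityMeasures_iff_map_eq hT

theorem ergodic_of_integralFunctional_mem_extremePoints {μ : ProbabilityMeasure X}
    (hext : integralFunctional μ ∈
      (integralFunctional '' invariantProbabilityMeasures T).extremePoints ℝ) :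
    Ergodic T (μ : Measure X) := by
  have hμ : μ ∈ invariantProbabilityMeasures T :=
    injective_integralFunctional.mem_set_image.1 hext.1
  refine Ergodic.of_mem_extremePoints ⟨⟨hμ, inferInstance⟩, ?_⟩
  rintro ν₁ ⟨hinv₁, hprob₁⟩ ν₂ ⟨hinv₂, hprob₂⟩ ⟨a, b, ha, hb, hab, hcomb⟩
  have ha_top : a ≠ ∞ := ne_top_of_le_ne_top ENNReal.one_ne_top (hab ▸ le_self_add)
  have hb_top : b ≠ ∞ := ne_top_of_le_ne_top ENNReal.one_ne_top (hab ▸ le_add_self)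
  let μ₁ : ProbabilityMeasure X := ⟨ν₁, hprob₁⟩
  let μ₂ : ProbabilityMeasure X := ⟨ν₂, hprob₂⟩
  have hsegment : integralFunctional μ ∈
      openSegment ℝ (integralFunctional μ₁) (integralFunctional μ₂) := by
    refine ⟨a.toReal, b.toReal, ENNReal.toReal_pos ha.ne' ha_top, ENNReal.toReal_pos hb.ne' hb_top,
      by rw [← ENNReal.toReal_add ha_top hb_top, hab, ENNReal.toReal_one], funext fun f ↦ ?_⟩
    rw [integralFunctional, ← hcomb, integral_smul_add_smul_measure (f.integrable ν₁)
      (f.integrable ν₂) ha_top hb_top]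
    rfl
  have heq : integralFunctional μ₁ = integralFunctional μ :=
    hext.2 (Set.mem_image_of_mem _ hinv₁) (Set.mem_image_of_mem _ hinv₂) hsegment
  exact congrArg ProbabilityMeasure.toMeasure (injective_integralFunctional heq)

theorem exists_ergodic_forall_integral_le [T2Space X] [CompactSpace X] (hT : Continuous T)
    (hne : (invariantProbabilityMeasures T).Nonempty) (F : X →ᵇ ℝ) :
    ∃ μ : ProbabilityMeasure X, Ergodic T (μ : Measure X) ∧
      ∀ ν ∈ invariantProbabilityMeasures T,
        ∫ x, F x ∂(ν : Measure X) ≤ ∫ x, F x ∂(μ : Measure X) := by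
  have hcompact : IsCompact (integralFunctional '' invariantProbabilityMeasures T) :=
    (isClosed_invariantProbabilityMeasures hT).isCompact.image continuous_integralFunctional
  obtain ⟨e, hext, hmax⟩ := exists_mem_extremePoints_isMaxOn hcompact (hne.image _)
    (ContinuousLinearMap.proj (R := ℝ) F)
  obtain ⟨μ, -, rfl⟩ := hext.1
  exact ⟨μ, ergodic_of_integralFunctional_mem_extremePoints hext,
    fun ν hν ↦ hmax (Set.mem_image_of_mem _ hν)⟩

end InvariantMeasures

section EmpiricalMeasures

lemma tendsto_birkhoffAverage_apply_sub_birkhoffAverage_of_isBounded {α ι E : Type*}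
    [NormedAddCommGroup E] [NormedSpace ℝ E] {g : α → E} (hg : Bornology.IsBounded (Set.range g))
    (T : α → α) {l : Filter ι} {n : ι → ℕ} (hn : Tendsto n l atTop) (x : ι → α) :
    Tendsto (fun i ↦ birkhoffAverage ℝ T g (n i) (T (x i)) - birkhoffAverage ℝ T g (n i) (x i)) l
      (𝓝 0) := by
  obtain ⟨C, hC⟩ := Metric.isBounded_range_iff.1 hg
  have hlim : Tendsto (fun i ↦ C / (n i : ℝ)) l (𝓝 0) :=
    tendsto_const_nhds.div_atTop (tendsto_natCast_atTop_atTop.comp hn)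
  refine squeeze_zero_norm (fun i ↦ ?_) hlim
  rw [← dist_eq_norm, dist_birkhoffAverage_apply_birkhoffAverage]
  gcongr
  exact hC _ _

lemma birkhoffAverage_comp_self {R α M : Type*} [DivisionSemiring R] [AddCommMonoid M] [Module R M]
    (T : α → α) (g : α → M) (n : ℕ) (x : α) :
    birkhoffAverage R T (g ∘ T) n x = birkhoffAverage R T g n (T x) := by
  simp only [birkhoffAverage, birkhoffSum, Function.comp_apply,
    ← Function.iterate_succ_apply' T, Function.iterate_succ_apply T]

variable {X : Type*} [MeasurableSpace X]

/-- The uniform probability measure on the orbit segment `x, T x, …, T^[n] x`. The segment has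
`n + 1` points, so that no special case is needed for `n = 0`. -/
noncomputable def empiricalMeasure (T : X → X) (n : ℕ) (x : X) : ProbabilityMeasure X :=
  ⟨((n + 1 : ℕ) : ℝ≥0∞)⁻¹ • ∑ i ∈ Finset.range (n + 1), Measure.dirac (T^[i] x), ⟨by
    simpa using ENNReal.inv_mul_cancel (Nat.cast_ne_zero.2 n.succ_ne_zero)
      (ENNReal.natCast_ne_top _)⟩⟩

lemma integral_empiricalMeasure {E : Type*} [NormedAddCommGroup E] [NormedSpace ℝ E]
    [CompleteSpace E] {f : X → E} (hf : StronglyMeasurable f) (T : X → X) (n : ℕ) (x : X) :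
    ∫ y, f y ∂(empiricalMeasure T n x : Measure X) = birkhoffAverage ℝ T f (n + 1) x := by
  rw [empiricalMeasure, ProbabilityMeasure.coe_mk, integral_smul_measure,
    integral_finsetSum_measure fun i _ ↦ integrable_dirac' hf (by simp)]
  simp only [integral_dirac' _ _ hf, ENNReal.toReal_inv, ENNReal.toReal_natCast, birkhoffAverage,
    birkhoffSum]

variable [TopologicalSpace X] [HasOuterApproxClosed X] [BorelSpace X] {T : X → X}

theorem mem_invariantProbabilityMeasures_of_tendsto_empiricalMeasure (hT : Continuous T)
    {ι : Type*} {l : Filter ι} [l.NeBot] {n : ι → ℕ} (hn : Tendsto n l atTop) {x : ι → X}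
    {μ : ProbabilityMeasure X} (hμ : Tendsto (fun i ↦ empiricalMeasure T (n i) (x i)) l (𝓝 μ)) :
    μ ∈ invariantProbabilityMeasures T := by
  rw [mem_invariantProbabilityMeasures_iff_map_eq hT]
  refine tendsto_nhds_unique (((ProbabilityMeasure.continuous_map hT).tendsto μ).comp hμ) ?_
  rw [ProbabilityMeasure.tendsto_iff_forall_integral_tendsto] at hμ ⊢
  intro f
  have hdiff := tendsto_birkhoffAverage_apply_sub_birkhoffAverage_of_isBounded f.isBounded_range T
    ((tendsto_add_atTop_nat 1).comp hn) x
  have hsum := hdiff.add (hμ f)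
  rw [zero_add] at hsum
  refine hsum.congr fun i ↦ ?_
  have hfT : StronglyMeasurable (f ∘ T) := (f.continuous.comp hT).stronglyMeasurable
  calc
    _ = birkhoffAverage ℝ T f (n i + 1) (T (x i)) := by
      rw [integral_empiricalMeasure f.continuous.stronglyMeasurable]
      exact sub_add_cancel _ _
    _ = ∫ y, (f ∘ T) y ∂(empiricalMeasure T (n i) (x i) : Measure X) := by
      rw [integral_empiricalMeasure hfT, birkhoffAverage_comp_self]
    _ = _ := (integral_map hT.aemeasurable f.continuous.aestronglyMeasurable).symm

variable [T2Space X] [CompactSpace X]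

theorem exists_mem_invariantProbabilityMeasures_integral_nonneg (hT : Continuous T) (F : X →ᵇ ℝ)
    (h : ∀ n, ∃ x, 0 ≤ birkhoffSum T F n x) :
    ∃ μ ∈ invariantProbabilityMeasures T, 0 ≤ ∫ x, F x ∂(μ : Measure X) := by
  choose x hx using h
  obtain ⟨μ, hμ⟩ := exists_clusterPt_of_compactSpace
    (map (fun n ↦ empiricalMeasure T n (x (n + 1))) atTop)
  obtain ⟨u, hu, hlim⟩ := mapClusterPt_iff_ultrafilter.1 hμ
  refine ⟨μ, mem_invariantProbabilityMeasures_of_tendsto_empiricalMeasure hT hu hlim, ?_⟩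
  refine ge_of_tendsto' (ProbabilityMeasure.tendsto_iff_forall_integral_tendsto.1 hlim F) fun n ↦ ?_
  rw [integral_empiricalMeasure F.continuous.stronglyMeasurable]
  exact smul_nonneg (by positivity) (hx (n + 1))

theorem exists_ergodic_integral_nonneg (hT : Continuous T) {F : X → ℝ} (hF : Continuous F)
    (h : ∀ n, ∃ x, 0 ≤ birkhoffSum T F n x) :
    ∃ μ : ProbabilityMeasure X, Ergodic T (μ : Measure X) ∧ 0 ≤ ∫ x, F x ∂(μ : Measure X) := by
  let Fb : X →ᵇ ℝ := .mkOfCompact ⟨F, hF⟩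
  obtain ⟨μ₀, hinv, hnonneg⟩ := exists_mem_invariantProbabilityMeasures_integral_nonneg hT Fb h
  obtain ⟨μ, hμ, hmax⟩ := exists_ergodic_forall_integral_le hT ⟨μ₀, hinv⟩ Fb
  exact ⟨μ, hμ, hnonneg.trans (hmax μ₀ hinv)⟩

theorem exists_ergodic_integral_nonpos (hT : Continuous T) {F : X → ℝ} (hF : Continuous F)
    (h : ∀ n, ∃ x, birkhoffSum T F n x ≤ 0) :
    ∃ μ : ProbabilityMeasure X, Ergodic T (μ : Measure X) ∧ ∫ x, F x ∂(μ : Measure X) ≤ 0 := by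
  obtain ⟨μ, hμ, hint⟩ := exists_ergodic_integral_nonneg hT (F := -F) hF.neg
    (by simpa only [birkhoffSum_neg, neg_nonneg] using h)
  exact ⟨μ, hμ, by simpa only [Pi.neg_apply, integral_neg, neg_nonneg] using hint⟩

end EmpiricalMeasures

section Conformal

variable {X : Type*} [TopologicalSpace X] {T : X → X}

lemma continuous_birkhoffSum {M : Type*} [TopologicalSpace M] [AddCommMonoid M] [ContinuousAdd M]
    (hT : Continuous T) {g : X → M} (hg : Continuous g) (n : ℕ) :
    Continuous (birkhoffSum T g n) :=
  continuous_finsetSum _ fun i _ ↦ hg.comp (hT.iterate i)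

variable [MeasurableSpace X] {G : X → ℝ} {m : Measure X} [IsProbabilityMeasure m]

theorem integral_exp_birkhoffSum_eq_one (hT : Continuous T) (hG : Continuous G)
    (hm : ∀ f : X → ℝ, Continuous f → ∫ x, f x ∂m = ∫ x, f (T x) * Real.exp (G x) ∂m) (n : ℕ) :
    ∫ x, Real.exp (birkhoffSum T G n x) ∂m = 1 := by
  induction n with
  | zero => simp
  | succ n ih =>
    rw [← ih, hm _ (continuous_birkhoffSum hT hG n).rexp]
    simp only [birkhoffSum_succ', Real.exp_add, mul_comm]

variable [OpensMeasurableSpace X] [CompactSpace X]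

theorem exists_birkhoffSum_nonneg_and_exists_nonpos (hT : Continuous T) (hG : Continuous G)
    (hm : ∀ f : X → ℝ, Continuous f → ∫ x, f x ∂m = ∫ x, f (T x) * Real.exp (G x) ∂m) (n : ℕ) :
    (∃ x, 0 ≤ birkhoffSum T G n x) ∧ ∃ x, birkhoffSum T G n x ≤ 0 := by
  have hone := integral_exp_birkhoffSum_eq_one hT hG hm n
  have hint : Integrable (fun x ↦ Real.exp (birkhoffSum T G n x)) m :=
    (continuous_birkhoffSum hT hG n).rexp.integrable_of_hasCompactSupport (.of_compactSpace _)
  constructor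
  · obtain ⟨x, hx⟩ := exists_integral_le hint
    exact ⟨x, Real.one_le_exp_iff.1 (hone ▸ hx)⟩
  · obtain ⟨x, hx⟩ := exists_le_integral hint
    exact ⟨x, Real.exp_le_one_iff.1 (hone ▸ hx)⟩

end Conformal

section Main

variable {X : Type*} [TopologicalSpace X] [T2Space X] [HasOuterApproxClosed X] [CompactSpace X]
  [MeasurableSpace X] [BorelSpace X] {T : X → X} {F : X → ℝ} {β : ℝ} {m : Measure X}
  [IsProbabilityMeasure m]

theorem exists_ergodic_integral_nonneg_and_exists_nonpos (hT : Continuous T) (hF : Continuous F)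
    (hβ : β ≠ 0)
    (hm : ∀ f : X → ℝ, Continuous f → ∫ x, f x ∂m = ∫ x, f (T x) * Real.exp (β * F x) ∂m) :
    (∃ ν : ProbabilityMeasure X, Ergodic T (ν : Measure X) ∧ 0 ≤ ∫ x, F x ∂(ν : Measure X)) ∧
      ∃ ν : ProbabilityMeasure X, Ergodic T (ν : Measure X) ∧ ∫ x, F x ∂(ν : Measure X) ≤ 0 := by
  have hG : Continuous fun x ↦ β * F x := hF.const_mul β
  have hsums := exists_birkhoffSum_nonneg_and_exists_nonpos hT hG hm
  obtain ⟨μ, hμ, hμ_nonneg⟩ := exists_ergodic_integral_nonneg hT hG fun n ↦ (hsums n).1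
  obtain ⟨ν, hν, hν_nonpos⟩ := exists_ergodic_integral_nonpos hT hG fun n ↦ (hsums n).2
  rw [integral_const_mul] at hμ_nonneg hν_nonpos
  rcases hβ.lt_or_gt with hneg | hpos
  · exact ⟨⟨ν, hν, nonneg_of_mul_nonpos_right hν_nonpos hneg⟩,
      ⟨μ, hμ, nonpos_of_mul_nonneg_right hμ_nonneg hneg⟩⟩
  · exact ⟨⟨μ, hμ, nonneg_of_mul_nonneg_right hμ_nonneg hpos⟩,
      ⟨ν, hν, nonpos_of_mul_nonpos_right hν_nonpos hpos⟩⟩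

theorem stmt6_general (hT : Continuous T) (hF : Continuous F) (hβ : β ≠ 0)
    (hm : ∀ f : X → ℝ, Continuous f → ∫ x, f x ∂m = ∫ x, f (T x) * Real.exp (β * F x) ∂m) :
    ∃ νp νm : Measure X,
      IsProbabilityMeasure νp ∧ Ergodic T νp ∧ IsProbabilityMeasure νm ∧ Ergodic T νm ∧
      0 ≤ ∫ x, F x ∂νp ∧ ∫ x, F x ∂νm ≤ 0 ∧
      ∃ t : ℝ≥0∞, t ≤ 1 ∧
        IsProbabilityMeasure (t • νp + (1 - t) • νm) ∧
        MeasurePreserving T (t • νp + (1 - t) • νm) (t • νp + (1 - t) • νm) ∧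
        ∫ x, F x ∂(t • νp + (1 - t) • νm) = 0 := by
  obtain ⟨⟨νp, hp_erg, hp_nonneg⟩, ⟨νm, hm_erg, hm_nonpos⟩⟩ :=
    exists_ergodic_integral_nonneg_and_exists_nonpos hT hF hβ hm
  have hint (ν : ProbabilityMeasure X) : Integrable F (ν : Measure X) :=
    hF.integrable_of_hasCompactSupport (.of_compactSpace F)
  obtain ⟨t, ht, hzero⟩ :=
    exists_integral_smul_add_smul_eq_zero (hint νp) (hint νm) hp_nonneg hm_nonpos
  exact ⟨νp, νm, inferInstance, hp_erg, inferInstance, hm_erg, hp_nonneg, hm_nonpos, t, ht,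
    isProbabilityMeasure_smul_add_smul (add_tsub_cancel_of_le ht),
    (hp_erg.toMeasurePreserving.smul_measure t).add_measure
      (hm_erg.toMeasurePreserving.smul_measure (1 - t)), hzero⟩

end Main

section Homeomorph

variable {X : Type*} [TopologicalSpace X] [MeasurableSpace X] {φ : X ≃ₜ X} {ν : Measure X}

lemma isInvariantMeasure_of_measurePreserving (h : MeasurePreserving φ ν ν) :
    IsInvariantMeasure φ ν :=
  fun _ hB ↦ h.measure_preimage hB.nullMeasurableSet

lemma isErgodicMeasure_of_ergodic (h : Ergodic φ ν) : IsErgodicMeasure φ ν :=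
  fun _ hB hφ ↦ h.measure_self_or_compl_eq_zero hB hφ

end Homeomorph

theorem stmt6 {X : Type*} [MetricSpace X] [CompactSpace X]
    [MeasurableSpace X] [BorelSpace X]
    (φ : X ≃ₜ X) (F : X → ℝ) (hF : Continuous F)
    (β : ℝ) (hβ : β ≠ 0)
    (m : Measure X) (hm : IsConformalMeasure φ F β m) :
    ∃ νp νm : Measure X,
      IsProbabilityMeasure νp ∧ IsInvariantMeasure φ νp ∧ IsErgodicMeasure φ νp ∧
      IsProbabilityMeasure νm ∧ IsInvariantMeasure φ νm ∧ IsErgodicMeasure φ νm ∧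
      0 ≤ ∫ x, F x ∂νp ∧ ∫ x, F x ∂νm ≤ 0 ∧
      ∃ t : ℝ≥0∞, t ≤ 1 ∧
        IsProbabilityMeasure (t • νp + (1 - t) • νm) ∧
        IsInvariantMeasure φ (t • νp + (1 - t) • νm) ∧
        ∫ x, F x ∂(t • νp + (1 - t) • νm) = 0 := by
  have : IsProbabilityMeasure m := hm.1
  obtain ⟨νp, νm, hp, hp_erg, hm', hm_erg, hp_nonneg, hm_nonpos, t, ht, ht_prob, ht_inv, hzero⟩ :=
    stmt6_general φ.continuous hF hβ hm.2
  exact ⟨νp, νm, hp, isInvariantMeasure_of_measurePreserving hp_erg.toMeasurePreserving,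
    isErgodicMeasure_of_ergodic hp_erg, hm',
    isInvariantMeasure_of_measurePreserving hm_erg.toMeasurePreserving,
    isErgodicMeasure_of_ergodic hm_erg, hp_nonneg, hm_nonpos, t, ht, ht_prob,
    isInvariantMeasure_of_measurePreserving ht_inv, hzero⟩
end

section
/- Let α be an irrational real number, let 𝕋 = ℝ/ℤ be the circle and let φ: 𝕋 → 𝕋 be the rotation φ(x) = x + α. Then there exists a continuous function F: 𝕋 → ℝ such that: (a) for every β ∈ ℝ there exists an e^{βF}-conformal measure for φ; (b) for every β ∈ ℝ, no e^{βF}-conformal measure is atomic; (c) for every β ≥ 0 there is exactly one φ-ergodic e^{βF}-conformal measure that is equivalent (mutually absolutely continuous) to a φ-invariant Borel probability measure; and (d) for every β < 0, no e^{βF}-conformal measure is equivalent to a φ-invariant Borel probability measure. -/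
open MeasureTheory Filter Topology

/-! The potential is the sum `F = ∑ k, (v k - v k ∘ φ)` of coboundaries of continuous functions
`v k ≥ 0`, converging uniformly although `∑ k, v k` does not. Each `v k` is a very flat tower over a
set of tiny measure: tall enough that `∫ exp (v k / (k + 1))` is at least `k`, yet supported on a
set of measure at most `2⁻ᵏ`. By Borel–Cantelli `w = ∑ k, v k` is finite almost everywhere, so
`F = w - w ∘ φ` almost everywhere, and by ergodicity a conformal measure absolutely continuous with
respect to the invariant measure `μ` must be proportional to `exp (-β w) μ`. This measure is finite
for `β ≥ 0` and infinite for `β < 0`.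

Conformal measures exist for every `β` since uniform limits of coboundaries inherit them by weak
compactness. They have no atoms because, `v k` being flat compared with the time the previous terms
take to return close to their initial value, the Birkhoff sums of `F` are bounded along infinitely
many times, and so an atom would carry its mass, up to a constant factor, to infinitely many points
of its orbit. -/

namespace IsInvariantMeasure

variable {X : Type*} [TopologicalSpace X] [MeasurableSpace X] [BorelSpace X]
  {φ : X ≃ₜ X} {μ : Measure X}

lemma measurePreserving (h : IsInvariantMeasure φ μ) : MeasurePreserving φ μ μ :=
  ⟨φ.measurable, Measure.ext fun B hB => by rw [Measure.map_apply φ.measurable hB, h B hB]⟩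

lemma isConformalMeasure_zero [IsProbabilityMeasure μ] (h : IsInvariantMeasure φ μ) (β : ℝ) :
    IsConformalMeasure φ 0 β μ := by
  refine ⟨inferInstance, fun f _ => ?_⟩
  simpa using (h.measurePreserving.integral_comp φ.measurableEmbedding f).symm

end IsInvariantMeasure

/-- `μ` is the only `φ`-invariant Borel probability measure. -/
structure IsUniquelyErgodic {X : Type*} [TopologicalSpace X] [MeasurableSpace X]
    (φ : X ≃ₜ X) (μ : Measure X) : Prop where
  isProbabilityMeasure : IsProbabilityMeasure μ
  isInvariantMeasure : IsInvariantMeasure φ μ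
  eq_of_isInvariantMeasure (ν : Measure X) :
    IsProbabilityMeasure ν → IsInvariantMeasure φ ν → ν = μ

/-- Conditioning on an invariant set of positive measure gives an invariant probability measure,
which vanishes on the complement of that set. -/
lemma IsUniquelyErgodic.ergodic {X : Type*} [TopologicalSpace X] [MeasurableSpace X]
    [BorelSpace X] {φ : X ≃ₜ X} {μ : Measure X} (h : IsUniquelyErgodic φ μ) : Ergodic φ μ := by
  have := h.isProbabilityMeasure
  refine ⟨h.isInvariantMeasure.measurePreserving, ⟨fun {B} hB hφB => ?_⟩⟩
  rw [eventuallyConst_set', ae_eq_empty, ae_eq_univ]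
  refine or_iff_not_imp_left.2 fun hμB => ?_
  have hcond : ProbabilityTheory.cond μ B = μ := by
    refine h.eq_of_isInvariantMeasure _ (ProbabilityTheory.cond_isProbabilityMeasure hμB)
      fun A hA => ?_
    rw [ProbabilityTheory.cond_apply hB, ProbabilityTheory.cond_apply hB]
    nth_rw 2 [← hφB]
    rw [← Set.preimage_inter, h.isInvariantMeasure _ (hB.inter hA)]
  rw [← hcond, ProbabilityTheory.cond_apply hB]
  simp

lemma isErgodicMeasure_of_absolutelyContinuous {X : Type*} [TopologicalSpace X]
    [MeasurableSpace X] {φ : X ≃ₜ X} {μ m : Measure X} (hμ : Ergodic φ μ) (hm : m ≪ μ) :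
    IsErgodicMeasure φ m := fun _ hB hφB =>
  (hμ.measure_self_or_compl_eq_zero hB hφB).imp (fun h => hm h) (fun h => hm h)

/-! ### Conformal measures -/

section Limits

variable {X : Type*} [TopologicalSpace X] [CompactSpace X] [MeasurableSpace X] [BorelSpace X]
  {ι : Type*} {l : Filter ι}

lemma tendsto_integral_of_tendsto_of_tendsto {m : ι → ProbabilityMeasure X}
    {m' : ProbabilityMeasure X} {G : ι → C(X, ℝ)} {G' : C(X, ℝ)}
    (hm : Tendsto m l (𝓝 m')) (hG : Tendsto G l (𝓝 G')) :
    Tendsto (fun i => ∫ x, G i x ∂(m i : Measure X)) l (𝓝 (∫ x, G' x ∂(m' : Measure X))) := by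
  have hlim : Tendsto (fun i => ∫ x, G' x ∂(m i : Measure X)) l
      (𝓝 (∫ x, G' x ∂(m' : Measure X))) :=
    ProbabilityMeasure.tendsto_iff_forall_integral_tendsto.1 hm
      (BoundedContinuousFunction.mkOfCompact G')
  have hdiff : Tendsto (fun i => ∫ x, (G i - G') x ∂(m i : Measure X)) l (𝓝 0) := by
    refine squeeze_zero_norm (fun i => ?_) (tendsto_iff_norm_sub_tendsto_zero.1 hG)
    simpa using norm_integral_le_of_norm_le_const (μ := (m i : Measure X))
      (Eventually.of_forall fun x => (G i - G').norm_coe_le_norm x)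
  refine (zero_add (∫ x, G' x ∂(m' : Measure X)) ▸ hdiff.add hlim).congr fun i => ?_
  have h_int (H : C(X, ℝ)) : Integrable H (m i : Measure X) :=
    H.continuous.integrable_of_hasCompactSupport (HasCompactSupport.of_compactSpace _)
  rw [← integral_add (h_int _) (h_int _)]
  simp

variable {φ : X ≃ₜ X} {β : ℝ} {G : ι → C(X, ℝ)} {F : C(X, ℝ)}

lemma isConformalMeasure_of_tendsto [l.NeBot] {m : ι → ProbabilityMeasure X}
    {m' : ProbabilityMeasure X} (hm : Tendsto m l (𝓝 m')) (hG : Tendsto G l (𝓝 F))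
    (hconf : ∀ i, IsConformalMeasure φ (G i) β (m i)) : IsConformalMeasure φ F β m' := by
  refine ⟨inferInstance, fun f hf => ?_⟩
  let weighted (H : C(X, ℝ)) : C(X, ℝ) :=
    ⟨fun x => f (φ x) * Real.exp (β * H x), by fun_prop⟩
  have hweighted : Continuous weighted :=
    (continuous_const (y := (⟨fun x => f (φ x), by fun_prop⟩ : C(X, ℝ)))).mul
      (ContinuousMap.continuous_postcomp ⟨fun t => Real.exp (β * t), by fun_prop⟩)
  have hright := tendsto_integral_of_tendsto_of_tendsto hm ((hweighted.tendsto F).comp hG)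
  have hleft := tendsto_integral_of_tendsto_of_tendsto hm
    (tendsto_const_nhds (x := (⟨f, hf⟩ : C(X, ℝ))))
  exact tendsto_nhds_unique hleft (hright.congr fun i => ((hconf i).2 f hf).symm)

lemma exists_isConformalMeasure_of_tendsto [T2Space X] [l.NeBot] (hG : Tendsto G l (𝓝 F))
    (hconf : ∀ i, ∃ m, IsConformalMeasure φ (G i) β m) : ∃ m, IsConformalMeasure φ F β m := by
  choose m hm using hconf
  let P (i : ι) : ProbabilityMeasure X := ⟨m i, (hm i).1⟩
  obtain ⟨p, -, hp⟩ := isCompact_univ.ultrafilter_le_nhds ((Ultrafilter.of l).map P) (by simp)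
  exact ⟨p, isConformalMeasure_of_tendsto (m := P) hp (hG.mono_left (Ultrafilter.of_le l)) hm⟩

end Limits

lemma isConformalMeasure_tilted {X : Type*} [TopologicalSpace X] [MeasurableSpace X]
    [BorelSpace X] {φ : X ≃ₜ X} {μ : Measure X} [NeZero μ] {F w : X → ℝ} {β : ℝ}
    (hφ : MeasurePreserving φ μ μ) (hF : ∀ᵐ x ∂μ, F x = w x - w (φ x))
    (h_int : Integrable (fun x => Real.exp (-β * w x)) μ) :
    IsConformalMeasure φ F β (μ.tilted fun x => -β * w x) := by
  refine ⟨isProbabilityMeasure_tilted h_int, fun f _ => ?_⟩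
  rw [integral_tilted, integral_tilted, ← hφ.integral_comp φ.measurableEmbedding]
  refine integral_congr_ae ?_
  filter_upwards [hF] with x hx
  have hexp : Real.exp (-β * w (φ x)) = Real.exp (-β * w x) * Real.exp (β * F x) := by
    rw [← Real.exp_add, hx]
    ring_nf
  rw [hexp, smul_eq_mul, smul_eq_mul]
  ring

lemma integrable_exp_and_eq_tilted_of_rnDeriv_ae_eq {X : Type*} [MeasurableSpace X]
    {μ m : Measure X} [IsProbabilityMeasure m] [m.HaveLebesgueDecomposition μ] {g : X → ℝ}
    (hg : Measurable g) (hm : m ≪ μ) {c : ENNReal}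
    (hc : m.rnDeriv μ =ᵐ[μ] fun x => c * ENNReal.ofReal (Real.exp (g x))) :
    Integrable (fun x => Real.exp (g x)) μ ∧ m = μ.tilted g := by
  set Z := ∫⁻ x, ENNReal.ofReal (Real.exp (g x)) ∂μ with hZ
  have hcZ : c * Z = 1 := by
    rw [hZ, ← lintegral_const_mul _ (by fun_prop), ← lintegral_congr_ae hc,
      Measure.lintegral_rnDeriv hm, measure_univ]
  have hZ_ne_top : Z ≠ ⊤ := by
    rintro h
    rw [h, ENNReal.mul_top'] at hcZ
    split_ifs at hcZ <;> simp at hcZ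
  have h_int : Integrable (fun x => Real.exp (g x)) μ :=
    ⟨by fun_prop, (hasFiniteIntegral_iff_ofReal (Eventually.of_forall fun x => by positivity)).2
      hZ_ne_top.lt_top⟩
  refine ⟨h_int, ?_⟩
  have hZ_eq : Z = ENNReal.ofReal (∫ x, Real.exp (g x) ∂μ) :=
    (ofReal_integral_eq_lintegral_ofReal h_int (Eventually.of_forall fun x => by positivity)).symm
  have hc_eq : c = (ENNReal.ofReal (∫ x, Real.exp (g x) ∂μ))⁻¹ :=
    hZ_eq ▸ ENNReal.eq_inv_of_mul_eq_one_left hcZ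
  have : NeZero μ := ⟨fun h => IsProbabilityMeasure.ne_zero m (by simpa [h] using hm)⟩
  rw [← Measure.withDensity_rnDeriv_eq m μ hm]
  refine withDensity_congr_ae (hc.trans (Eventually.of_forall fun x => ?_))
  beta_reduce
  rw [hc_eq, ENNReal.ofReal_div_of_pos (integral_exp_pos h_int), ENNReal.div_eq_inv_mul]

namespace IsConformalMeasure

variable {X : Type*} [TopologicalSpace X] [CompactSpace X] [HasOuterApproxClosed X]
  [MeasurableSpace X] [BorelSpace X] {φ : X ≃ₜ X} {F : X → ℝ} {β : ℝ} {m : Measure X}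

lemma map_withDensity (h : IsConformalMeasure φ F β m) (hF : Continuous F) :
    (m.withDensity fun x => ENNReal.ofReal (Real.exp (β * F x))).map φ = m := by
  obtain ⟨hm, hconf⟩ := h
  have h_int : Integrable (fun x => Real.exp (β * F x)) m :=
    Continuous.integrable_of_hasCompactSupport (by fun_prop) (HasCompactSupport.of_compactSpace _)
  have := isFiniteMeasure_withDensity_ofReal h_int.2
  refine ext_of_forall_integral_eq_of_IsFiniteMeasure fun f => ?_
  rw [φ.measurableEmbedding.integral_map, hconf f f.continuous,
    integral_withDensity_eq_integral_toReal_smul (by fun_prop)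
      (Eventually.of_forall fun x => ENNReal.ofReal_lt_top)]
  simp only [ENNReal.toReal_ofReal (Real.exp_nonneg _), smul_eq_mul, mul_comm]

section Atoms

variable [T1Space X]

lemma measure_singleton_map (h : IsConformalMeasure φ F β m) (hF : Continuous F) (x : X) :
    m {φ x} = ENNReal.ofReal (Real.exp (β * F x)) * m {x} := by
  conv_lhs => rw [← h.map_withDensity hF]
  rw [Measure.map_apply φ.measurable (measurableSet_singleton _), ← Set.image_singleton,
    φ.preimage_image, withDensity_apply _ (measurableSet_singleton _), lintegral_singleton]

lemma measure_singleton_iterate (h : IsConformalMeasure φ F β m) (hF : Continuous F) (x : X)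
    (n : ℕ) :
    m {φ^[n] x} = ENNReal.ofReal (Real.exp (β * birkhoffSum φ F n x)) * m {x} := by
  induction n with
  | zero => simp
  | succ n ih =>
    rw [Function.iterate_succ_apply', h.measure_singleton_map hF, ih, ← mul_assoc,
      ← ENNReal.ofReal_mul (Real.exp_nonneg _), ← Real.exp_add, birkhoffSum_succ]
    ring_nf

/-- Otherwise infinitely many points of the orbit have mass bounded below. -/
lemma measure_singleton_eq_zero (h : IsConformalMeasure φ F β m) (hF : Continuous F) {x : X}
    (hx : x ∉ Function.periodicPts φ) {C : ℝ}
    (hC : ∃ᶠ n in atTop, |birkhoffSum φ F n x| ≤ C) : m {x} = 0 := by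
  have := h.1
  by_contra hmx
  have horbit : Function.Injective fun n => φ^[n] x := fun i j hij => by
    wlog hlt : i < j generalizing i j with hwlog
    · by_contra hne
      exact hne (hwlog j i hij.symm (by omega)).symm
    exact absurd (Function.mk_mem_periodicPts (Nat.sub_pos_of_lt hlt)
      (Function.iterate_cancel φ.injective hij.symm)) hx
  have hinf : Set.Infinite ((fun n => φ^[n] x) '' {n | |birkhoffSum φ F n x| ≤ C}) :=
    (Nat.frequently_atTop_iff_infinite.1 hC).image horbit.injOn
  refine measure_ne_top m _ (hinf.meas_eq_top
    ⟨ENNReal.ofReal (Real.exp (-(|β| * C))) * m {x},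
      mul_ne_zero (by simpa using Real.exp_pos _) hmx, ?_⟩)
  rintro _ ⟨n, hn : |birkhoffSum φ F n x| ≤ C, rfl⟩
  rw [h.measure_singleton_iterate hF]
  gcongr
  calc -(|β| * C) ≤ -|β * birkhoffSum φ F n x| := by rw [abs_mul]; gcongr
    _ ≤ β * birkhoffSum φ F n x := neg_abs_le _

end Atoms

section Density

variable {μ : Measure X} [IsFiniteMeasure μ]

lemma rnDeriv_comp_ae_eq (h : IsConformalMeasure φ F β m) (hF : Continuous F)
    (hφ : MeasurePreserving φ μ μ) (hm : m ≪ μ) :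
    (fun x => m.rnDeriv μ (φ x)) =ᵐ[μ]
      fun x => ENNReal.ofReal (Real.exp (β * F x)) * m.rnDeriv μ x := by
  have := h.1
  set g := m.rnDeriv μ
  have hg : Measurable g := Measure.measurable_rnDeriv m μ
  have hgm : μ.withDensity g = m := Measure.withDensity_rnDeriv_eq m μ hm
  refine ae_eq_of_forall_setLIntegral_eq_of_sigmaFinite (by fun_prop) (by fun_prop)
    fun s hs _ => ?_
  have hpre : φ ⁻¹' (φ '' s) = s := φ.preimage_image s
  have hφs : MeasurableSet (φ '' s) := φ.measurableEmbedding.measurableSet_image.2 hs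
  calc ∫⁻ x in s, g (φ x) ∂μ = m (φ '' s) := by
        rw [← hpre, hφ.setLIntegral_comp_preimage hφs hg, ← withDensity_apply _ hφs, hgm, hpre]
    _ = ∫⁻ x in s, ENNReal.ofReal (Real.exp (β * F x)) ∂m := by
        conv_lhs => rw [← h.map_withDensity hF]
        rw [Measure.map_apply φ.measurable hφs, hpre, withDensity_apply _ hs]
    _ = ∫⁻ x in s, ENNReal.ofReal (Real.exp (β * F x)) * g x ∂μ := by
        conv_lhs => rw [← hgm]
        rw [setLIntegral_withDensity_eq_setLIntegral_mul _ hg (by fun_prop) hs]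
        simp only [Pi.mul_apply, mul_comm]

/-- The product of the density with `e^{βw}` is invariant, hence constant by ergodicity. -/
lemma exists_rnDeriv_ae_eq (h : IsConformalMeasure φ F β m) (hF : Continuous F)
    (hφ : Ergodic φ μ) (hm : m ≪ μ) {w : X → ℝ} (hw : Measurable w)
    (hFw : ∀ᵐ x ∂μ, F x = w x - w (φ x)) :
    ∃ c, m.rnDeriv μ =ᵐ[μ] fun x => c * ENNReal.ofReal (Real.exp (-β * w x)) := by
  have hinv : (fun x => m.rnDeriv μ x * ENNReal.ofReal (Real.exp (β * w x))) ∘ φ =ᵐ[μ]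
      fun x => m.rnDeriv μ x * ENNReal.ofReal (Real.exp (β * w x)) := by
    filter_upwards [h.rnDeriv_comp_ae_eq hF hφ.toMeasurePreserving hm, hFw] with x hx hFx
    rw [Function.comp_apply, hx, mul_right_comm, ← ENNReal.ofReal_mul (Real.exp_nonneg _),
      ← Real.exp_add, hFx, mul_comm]
    ring_nf
  obtain ⟨c, hc⟩ := hφ.ae_eq_const_of_ae_eq_comp₀
    (Measurable.nullMeasurable (by fun_prop)) hinv
  refine ⟨c, hc.mono fun x hx => ?_⟩
  beta_reduce at hx ⊢
  rw [Function.const_apply] at hx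
  rw [← hx, mul_assoc, ← ENNReal.ofReal_mul (Real.exp_nonneg _), ← Real.exp_add]
  simp

lemma integrable_exp_and_eq_tilted (h : IsConformalMeasure φ F β m) (hF : Continuous F)
    (hφ : Ergodic φ μ) (hm : m ≪ μ) {w : X → ℝ} (hw : Measurable w)
    (hFw : ∀ᵐ x ∂μ, F x = w x - w (φ x)) :
    Integrable (fun x => Real.exp (-β * w x)) μ ∧ m = μ.tilted fun x => -β * w x := by
  have := h.1
  obtain ⟨c, hc⟩ := h.exists_rnDeriv_ae_eq hF hφ hm hw hFw
  exact integrable_exp_and_eq_tilted_of_rnDeriv_ae_eq (by fun_prop) hm hc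

end Density

end IsConformalMeasure

/-! ### Towers -/

/-- The piecewise linear weight that rises with slope `1` from `0` at `i = 0` to `N` at `i = N`,
falls with slope `-1` to `0` at `i = 2 * N`, and stays `0` afterwards because the subtraction
is truncated. -/
def tent (N i : ℕ) : ℕ := min i (2 * N - i)

lemma tent_le_tent_succ_add_one (N i : ℕ) : tent N i ≤ tent N (i + 1) + 1 := by
  grind [tent]

lemma tent_succ_le_tent_add_one (N i : ℕ) : tent N (i + 1) ≤ tent N i + 1 := by
  grind [tent]

section Tower

variable {X : Type*} [TopologicalSpace X]

/-- The tower of height `N` over `u`: the maximum along the orbit segment `x, T x, …, T^[2 * N] x`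
of `u` weighted by `tent N`. Moving along the orbit changes it by at most `1`, while it is at
least `N` at the points that reach `u = 1` after `N` steps. -/
noncomputable def tower (T : C(X, X)) (u : C(X, ℝ)) (N : ℕ) : C(X, ℝ) where
  toFun x := (Finset.range (2 * N + 1)).sup' Finset.nonempty_range_add_one
    fun i => tent N i * u (T^[i] x)
  continuous_toFun := Continuous.finset_sup'_apply _ fun i _ =>
    continuous_const.mul (u.continuous.comp (T.continuous.iterate i))

variable {T : C(X, X)} {u : C(X, ℝ)} {N : ℕ}

lemma tower_le_iff {x : X} {c : ℝ} :
    tower T u N x ≤ c ↔ ∀ i < 2 * N + 1, tent N i * u (T^[i] x) ≤ c :=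
  (Finset.sup'_le_iff Finset.nonempty_range_add_one _).trans (by simp only [Finset.mem_range])

lemma tower_nonneg (x : X) : 0 ≤ tower T u N x := by
  simpa [tent] using tower_le_iff.1 (le_refl (tower T u N x)) 0 (Nat.succ_pos _)

lemma le_tower (x : X) (i : ℕ) : tent N i * u (T^[i] x) ≤ tower T u N x := by
  by_cases hi : i < 2 * N + 1
  · exact tower_le_iff.1 le_rfl i hi
  · have htent : tent N i = 0 := by grind [tent]
    simpa [htent] using tower_nonneg x

lemma le_tower_of_eq_one {x : X} (hx : u (T^[N] x) = 1) : N ≤ tower T u N x := by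
  have htent : tent N N = N := by grind [tent]
  simpa [htent, hx] using le_tower (T := T) (u := u) (N := N) x N

lemma abs_tower_map_sub_le (hu : ∀ x, u x ∈ Set.Icc 0 1) (x : X) :
    |tower T u N (T x) - tower T u N x| ≤ 1 := by
  have hstep {a b : ℕ} (hab : a ≤ b + 1) (y : X) : a * u y ≤ b * u y + 1 := by
    have : (a : ℝ) ≤ b + 1 := by exact_mod_cast hab
    nlinarith [(hu y).1, (hu y).2]
  rw [abs_sub_le_iff, sub_le_iff_le_add', sub_le_iff_le_add', tower_le_iff, tower_le_iff]
  constructor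
  · intro i _
    rw [← Function.iterate_succ_apply]
    exact (hstep (tent_le_tent_succ_add_one N i) _).trans
      (by linarith [le_tower (T := T) (u := u) (N := N) x (i + 1)])
  · rintro (_ | i) -
    · simpa [tent] using add_nonneg (tower_nonneg (T x)) zero_le_one
    · rw [Function.iterate_succ_apply]
      exact (hstep (tent_succ_le_tent_add_one N i) _).trans
        (by linarith [le_tower (T := T) (u := u) (N := N) (T x) i])

variable [MeasurableSpace X] [BorelSpace X] {μ : Measure X} [IsFiniteMeasure μ]

lemma measureReal_tower_ne_zero_le (hT : MeasurePreserving T μ μ) :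
    μ.real {x | tower T u N x ≠ 0} ≤ (2 * N + 1) * μ.real {x | u x ≠ 0} := by
  have hsub : {x | tower T u N x ≠ 0} ⊆
      ⋃ i ∈ Finset.range (2 * N + 1), T^[i] ⁻¹' {x | u x ≠ 0} := by
    intro x hx
    obtain ⟨i, hi, heq⟩ := Finset.exists_mem_eq_sup'
      (Finset.nonempty_range_add_one (n := 2 * N)) fun i => (tent N i : ℝ) * u (T^[i] x)
    exact Set.mem_biUnion hi (right_ne_zero_of_mul (heq.symm.trans_ne hx))
  have hpre (i : ℕ) : μ.real (T^[i] ⁻¹' {x | u x ≠ 0}) = μ.real {x | u x ≠ 0} :=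
    (hT.iterate i).measureReal_preimage
      (isOpen_ne_fun u.continuous continuous_const).measurableSet.nullMeasurableSet
  calc μ.real {x | tower T u N x ≠ 0}
    _ ≤ ∑ i ∈ Finset.range (2 * N + 1), μ.real (T^[i] ⁻¹' {x | u x ≠ 0}) :=
        (measureReal_mono hsub (measure_ne_top μ _)).trans (measureReal_biUnion_finset_le _ _)
    _ = (2 * N + 1) * μ.real {x | u x ≠ 0} := by
        simp only [hpre, Finset.sum_const, Finset.card_range, nsmul_eq_mul]
        push_cast
        ring

lemma mul_exp_le_integral_exp_tower [CompactSpace X] (hT : MeasurePreserving T μ μ) {c : ℝ}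
    (hc : 0 ≤ c) :
    μ.real {x | u x = 1} * Real.exp (c * N) ≤ ∫ x, Real.exp (c * tower T u N x) ∂μ := by
  have hpre : μ.real (T^[N] ⁻¹' {x | u x = 1}) = μ.real {x | u x = 1} :=
    (hT.iterate N).measureReal_preimage
      (isClosed_eq u.continuous continuous_const).measurableSet.nullMeasurableSet
  have hsub : T^[N] ⁻¹' {x | u x = 1} ⊆
      {x | Real.exp (c * N) ≤ Real.exp (c * tower T u N x)} := fun x hx =>
    Real.exp_le_exp.2 (mul_le_mul_of_nonneg_left (le_tower_of_eq_one hx) hc)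
  have h_int : Integrable (fun x => Real.exp (c * tower T u N x)) μ :=
    Continuous.integrable_of_hasCompactSupport (by fun_prop) (HasCompactSupport.of_compactSpace _)
  rw [← hpre, mul_comm]
  exact (mul_le_mul_of_nonneg_left (measureReal_mono hsub) (Real.exp_nonneg _)).trans
    (mul_meas_ge_le_integral_of_nonneg (Eventually.of_forall fun x => Real.exp_nonneg _) h_int _)

end Tower

section SmallSupport

variable {X : Type*} [TopologicalSpace X] [MeasurableSpace X] {μ : Measure X}

lemma exists_isOpen_measure_pos_lt [HereditarilyLindelofSpace X] [μ.OuterRegular]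
    [NullSingletonClass μ] (hμ : μ ≠ 0) {η : ENNReal} (hη : 0 < η) :
    ∃ U, IsOpen U ∧ 0 < μ U ∧ μ U < η := by
  obtain ⟨x, hx⟩ := Measure.nonempty_support hμ
  obtain ⟨U, hxU, hU, hUη⟩ := Set.exists_isOpen_lt_of_lt {x} η
    ((measure_singleton (μ := μ) x).trans_lt hη)
  exact ⟨U, hU, (Measure.mem_support_iff_forall x).1 hx U (hU.mem_nhds (hxU rfl)), hUη⟩

lemma exists_continuousMap_support_subset_measureReal_lt [NormalSpace X] [μ.WeaklyRegular]
    [IsFiniteMeasure μ] {U : Set X} (hU : IsOpen U) (hμU : 0 < μ U) :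
    ∃ u : C(X, ℝ), (∀ x, u x ∈ Set.Icc 0 1) ∧ {x | u x ≠ 0} ⊆ U ∧
      μ.real U < 2 * μ.real {x | u x = 1} := by
  obtain ⟨K, hKU, hK, hμK⟩ := hU.exists_lt_isClosed
    (ENNReal.half_lt_self hμU.ne' (measure_ne_top μ U))
  obtain ⟨u, hu_zero, hu_one, hu⟩ := exists_continuous_zero_one_of_isClosed hU.isClosed_compl hK
    (Set.disjoint_compl_left_iff_subset.2 hKU)
  refine ⟨u, hu, fun x hx => not_not.1 fun hxU => hx (hu_zero hxU), ?_⟩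
  have hμK' : μ.real U / 2 < μ.real K := by
    simpa [Measure.real] using ENNReal.toReal_strict_mono (measure_ne_top μ K) hμK
  have hK_one : μ.real K ≤ μ.real {x | u x = 1} := measureReal_mono fun x hx => hu_one hx
  linarith

end SmallSupport

/-- Take `N` of order `δ / p`; the exponential then outgrows the factor `1 / p`. -/
lemma exists_forall_exists_nat_mul_le_and_le_mul_exp {c δ : ℝ} (hc : 0 < c) (hδ : 0 < δ) (K : ℝ) :
    ∃ η > 0, ∀ p, 0 < p → p < η →
      ∃ N : ℕ, (2 * N + 1) * p ≤ δ ∧ K ≤ p * Real.exp (c * N) := by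
  refine ⟨min (δ / 3) ((c * δ) ^ 2 / (72 * (|K| + 1))), by positivity, fun p hp hpη => ?_⟩
  obtain ⟨hpδ, hpK⟩ := lt_min_iff.1 hpη
  rw [lt_div_iff₀ (by positivity)] at hpδ hpK
  set y := δ / (3 * p) with hy
  have hyp : y * (3 * p) = δ := by rw [hy]; field_simp
  have hy_one : 1 ≤ y := by rw [hy, one_le_div₀ (by positivity)]; linarith
  have hN_le : (⌊y⌋₊ : ℝ) ≤ y := Nat.floor_le (by positivity)
  have hN_ge : y / 2 ≤ ⌊y⌋₊ := (Nat.div_two_lt_floor hy_one).le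
  refine ⟨⌊y⌋₊, by nlinarith, ?_⟩
  have hquad : (c * (y / 2)) ^ 2 / 2 ≤ Real.exp (c * ⌊y⌋₊) :=
    calc (c * (y / 2)) ^ 2 / 2 ≤ (c * ⌊y⌋₊) ^ 2 / 2 := by gcongr
      _ ≤ 1 + c * ⌊y⌋₊ + (c * ⌊y⌋₊) ^ 2 / 2 := le_add_of_nonneg_left (by positivity)
      _ ≤ Real.exp (c * ⌊y⌋₊) := Real.quadratic_le_exp_of_nonneg (by positivity)
  calc K ≤ (c * δ) ^ 2 / (72 * p) := by
        rw [le_div_iff₀ (by positivity)]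
        nlinarith [le_abs_self K]
    _ = p * ((c * (y / 2)) ^ 2 / 2) := by rw [hy]; field_simp; norm_num
    _ ≤ p * Real.exp (c * ⌊y⌋₊) := by gcongr

section Bump

variable {X : Type*} [TopologicalSpace X] [CompactSpace X] [TopologicalSpace.MetrizableSpace X]
  [MeasurableSpace X] [BorelSpace X] {T : C(X, X)} {μ : Measure X} [IsFiniteMeasure μ] [NeZero μ]
  [NullSingletonClass μ]

lemma exists_bump (hT : MeasurePreserving T μ μ) {ε δ c : ℝ} (hε : 0 < ε) (hδ : 0 < δ)
    (hc : 0 < c) (K : ℝ) :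
    ∃ v : C(X, ℝ), (∀ x, 0 ≤ v x) ∧ (∀ x, |v (T x) - v x| ≤ ε) ∧
      μ.real {x | v x ≠ 0} ≤ δ ∧ K ≤ ∫ x, Real.exp (c * v x) ∂μ := by
  obtain ⟨η, hη, hN⟩ :=
    exists_forall_exists_nat_mul_le_and_le_mul_exp (mul_pos hc hε) hδ (2 * K)
  obtain ⟨U, hU, hμU, hUη⟩ :=
    exists_isOpen_measure_pos_lt (NeZero.ne μ) (ENNReal.ofReal_pos.2 hη)
  obtain ⟨u, hu, huU, hu_one⟩ := exists_continuousMap_support_subset_measureReal_lt hU hμU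
  obtain ⟨N, hNδ, hNK⟩ := hN (μ.real U) (ENNReal.toReal_pos hμU.ne' (measure_ne_top μ U))
    ((ENNReal.lt_ofReal_iff_toReal_lt (measure_ne_top μ U)).1 hUη)
  refine ⟨ε • tower T u N, fun x => mul_nonneg hε.le (tower_nonneg x), fun x => ?_, ?_, ?_⟩
  · have := abs_tower_map_sub_le (T := T) (N := N) hu x
    simpa [← mul_sub, abs_mul, abs_of_pos hε] using mul_le_mul_of_nonneg_left this hε.le
  · calc μ.real {x | (ε • tower T u N) x ≠ 0} = μ.real {x | tower T u N x ≠ 0} := by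
          simp [hε.ne']
      _ ≤ (2 * N + 1) * μ.real {x | u x ≠ 0} := measureReal_tower_ne_zero_le hT
      _ ≤ (2 * N + 1) * μ.real U := by gcongr; exact measure_ne_top μ U
      _ ≤ δ := hNδ
  · calc K ≤ μ.real {x | u x = 1} * Real.exp (c * ε * N) := by
          nlinarith [Real.exp_pos (c * ε * N)]
      _ ≤ ∫ x, Real.exp (c * ε * tower T u N x) ∂μ :=
          mul_exp_le_integral_exp_tower hT (by positivity)
      _ = ∫ x, Real.exp (c * (ε • tower T u N) x) ∂μ := by simp [mul_assoc]

end Bump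

lemma exists_forall_exists_mem_Icc_abs_iterate_sub_le {X : Type*} [TopologicalSpace X]
    [CompactSpace X] {T : C(X, X)} (hrec : ∀ x, MapClusterPt x atTop fun n => T^[n] x)
    (V : C(X, ℝ)) (k : ℕ) {ε : ℝ} (hε : 0 < ε) :
    ∃ N, ∀ x, ∃ j ∈ Set.Icc k N, |V (T^[j] x) - V x| ≤ ε := by
  let returning (j : ℕ) : Set X := {x | |V (T^[j] x) - V x| < ε}
  have hopen (j : ℕ) : IsOpen (returning j) :=
    isOpen_lt (by have := T.continuous.iterate j; fun_prop) continuous_const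
  have hcover : Set.univ ⊆ ⋃ j : Set.Ici k, returning j := fun x _ => by
    have hball : {y | |V y - V x| < ε} ∈ 𝓝 x :=
      (isOpen_lt (by fun_prop) continuous_const).mem_nhds (by simpa using hε)
    obtain ⟨j, hxj, hkj⟩ :=
      (((hrec x).frequently hball).and_eventually (eventually_ge_atTop k)).exists
    exact Set.mem_iUnion.2 ⟨⟨j, hkj⟩, hxj⟩
  obtain ⟨J, hJ⟩ := isCompact_univ.elim_finite_subcover _ (fun j : Set.Ici k => hopen j) hcover
  refine ⟨J.sup Subtype.val, fun x => ?_⟩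
  obtain ⟨j, hjJ, hj⟩ := Set.mem_iUnion₂.1 (hJ (Set.mem_univ x))
  exact ⟨j, ⟨j.2, Finset.le_sup (f := Subtype.val) hjJ⟩, le_of_lt hj⟩

/-! ### The potential -/

section Coboundary

variable {X : Type*} [TopologicalSpace X] {T : C(X, X)}

/-- The coboundary `v - v ∘ T` of the transfer function `v`. -/
def coboundary (T : C(X, X)) (v : C(X, ℝ)) : C(X, ℝ) := v - v.comp T

lemma coboundary_sum {ι : Type*} (s : Finset ι) (v : ι → C(X, ℝ)) :
    coboundary T (∑ i ∈ s, v i) = ∑ i ∈ s, coboundary T (v i) := by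
  ext x
  simp [coboundary, ContinuousMap.sum_apply, Finset.sum_sub_distrib]

lemma birkhoffSum_coboundary (v : C(X, ℝ)) (n : ℕ) (x : X) :
    birkhoffSum T (coboundary T v) n x = v x - v (T^[n] x) := by
  simpa [birkhoffSum, coboundary, Function.iterate_succ_apply'] using
    Finset.sum_range_sub' (fun i => v (T^[i] x)) n

lemma abs_birkhoffSum_le [CompactSpace X] (F : C(X, ℝ)) (n : ℕ) (x : X) :
    |birkhoffSum T F n x| ≤ n * ‖F‖ := by
  simpa [birkhoffSum] using
    norm_sum_le_of_le (Finset.range n) fun i _ => F.norm_coe_le_norm (T^[i] x)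

end Coboundary

/-- A series of continuous transfer functions whose coboundaries are summable in `C(X, ℝ)`, and
so rapidly that the Birkhoff sums of their sum are controlled along the return times supplied by
`exists_return`; the supports shrink, so the series itself converges almost everywhere, but the
exponential moments of its terms blow up. -/
structure TransferSeries {X : Type*} [TopologicalSpace X] [MeasurableSpace X]
    (T : C(X, X)) (μ : Measure X) where
  term : ℕ → C(X, ℝ)
  window : ℕ → ℕ
  monotone_window : Monotone window
  term_nonneg (k : ℕ) (x : X) : 0 ≤ term k x
  abs_term_map_sub_le (k : ℕ) (x : X) :
    |term k (T x) - term k x| ≤ (1 / 2) ^ k / (window k + 1)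
  exists_return (k : ℕ) (x : X) : ∃ j ∈ Set.Icc k (window k),
    |(∑ i ∈ Finset.range k, term i) (T^[j] x) - (∑ i ∈ Finset.range k, term i) x| ≤ 1
  measureReal_term_ne_zero_le (k : ℕ) : μ.real {x | term k x ≠ 0} ≤ (1 / 2) ^ k
  le_integral_exp_term (k : ℕ) : k ≤ ∫ x, Real.exp ((k + 1 : ℝ)⁻¹ * term k x) ∂μ

namespace TransferSeries

section Existence

variable {X : Type*} [TopologicalSpace X] [CompactSpace X] [TopologicalSpace.MetrizableSpace X]
  [MeasurableSpace X] [BorelSpace X] {T : C(X, X)} {μ : Measure X} [IsFiniteMeasure μ] [NeZero μ]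
  [NullSingletonClass μ]

/-- The terms are chosen recursively: the next bump has to be flat relative to the return window
of the sum of the previous ones. -/
theorem nonempty (hT : MeasurePreserving T μ μ)
    (hrec : ∀ x, MapClusterPt x atTop fun n => T^[n] x) : Nonempty (TransferSeries T μ) := by
  choose bump bump_nonneg bump_map bump_support bump_exp using fun k n : ℕ =>
    exists_bump hT (ε := (1 / 2) ^ k / (n + 1)) (δ := (1 / 2) ^ k) (c := (k + 1 : ℝ)⁻¹)
      (by positivity) (by positivity) (by positivity) k
  choose returnBound hreturn using fun (V : C(X, ℝ)) (k : ℕ) =>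
    exists_forall_exists_mem_Icc_abs_iterate_sub_le hrec V k one_pos
  let state (k : ℕ) : C(X, ℝ) × ℕ := k.rec (0, 0) fun k s =>
    (s.1 + bump k s.2, max s.2 (returnBound (s.1 + bump k s.2) (k + 1)))
  have hstate (k : ℕ) : ∑ i ∈ Finset.range k, bump i (state i).2 = (state k).1 := by
    induction k with
    | zero => rfl
    | succ k ih => rw [Finset.sum_range_succ, ih]
  refine ⟨⟨fun k => bump k (state k).2, fun k => (state k).2,
    monotone_nat_of_le_succ fun k => le_max_left _ _, fun k => bump_nonneg k _,
    fun k => bump_map k _, fun k x => ?_, fun k => bump_support k _, fun k => bump_exp k _⟩⟩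
  rw [hstate]
  cases k with
  | zero => exact ⟨0, by simp, by simp⟩
  | succ k =>
    obtain ⟨j, hj, hxj⟩ := hreturn (state (k + 1)).1 (k + 1) x
    exact ⟨j, ⟨hj.1, hj.2.trans (le_max_right _ _)⟩, hxj⟩

end Existence

variable {X : Type*} [TopologicalSpace X] [MeasurableSpace X] {T : C(X, X)} {μ : Measure X}

/-- The sum of the coboundaries of the terms, which converges in `C(X, ℝ)`. -/
noncomputable def potential (S : TransferSeries T μ) : C(X, ℝ) :=
  ∑' k, coboundary T (S.term k)

/-- The pointwise sum of the terms; by the convention for divergent sums it is `0` on the null set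
where they are not summable. -/
noncomputable def transfer (S : TransferSeries T μ) (x : X) : ℝ := ∑' k, S.term k x

lemma transfer_nonneg (S : TransferSeries T μ) (x : X) : 0 ≤ S.transfer x :=
  tsum_nonneg fun k => S.term_nonneg k x

lemma measurable_transfer [OpensMeasurableSpace X] (S : TransferSeries T μ) :
    Measurable S.transfer :=
  Measurable.tsum fun k => (S.term k).continuous.measurable

section Potential

variable [CompactSpace X] (S : TransferSeries T μ)

lemma norm_coboundary_term_le (k : ℕ) :
    ‖coboundary T (S.term k)‖ ≤ (1 / 2) ^ k / (S.window k + 1) := by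
  refine (ContinuousMap.norm_le _ (by positivity)).2 fun x => ?_
  simpa [coboundary, abs_sub_comm] using S.abs_term_map_sub_le k x

lemma summable_coboundary_term : Summable fun k => coboundary T (S.term k) :=
  Summable.of_norm_bounded summable_geometric_two fun k =>
    (S.norm_coboundary_term_le k).trans
      (div_le_self (by positivity) (le_add_of_nonneg_left (Nat.cast_nonneg _)))

lemma tendsto_coboundary_sum_term :
    Tendsto (fun k => coboundary T (∑ i ∈ Finset.range k, S.term i)) atTop (𝓝 S.potential) := by
  simpa only [coboundary_sum, potential] using S.summable_coboundary_term.hasSum.tendsto_sum_nat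

lemma norm_potential_sub_coboundary_sum_term_le (k : ℕ) :
    ‖S.potential - coboundary T (∑ i ∈ Finset.range k, S.term i)‖ ≤ 2 / (S.window k + 1) := by
  rw [potential, ← S.summable_coboundary_term.sum_add_tsum_nat_add k, coboundary_sum,
    add_sub_cancel_left]
  refine tsum_of_norm_bounded (hasSum_geometric_two.div_const _) fun i =>
    (S.norm_coboundary_term_le (i + k)).trans ?_
  have hwindow : S.window k ≤ S.window (i + k) := S.monotone_window (Nat.le_add_left k i)
  have hpow : ((1 : ℝ) / 2) ^ (i + k) ≤ (1 / 2) ^ i :=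
    pow_le_pow_of_le_one (by norm_num) (by norm_num) (Nat.le_add_right i k)
  gcongr

lemma frequently_abs_birkhoffSum_potential_le (x : X) :
    ∃ᶠ j in atTop, |birkhoffSum T S.potential j x| ≤ 3 := by
  refine frequently_atTop.2 fun k => ?_
  obtain ⟨j, ⟨hkj, hj⟩, hreturn⟩ := S.exists_return k x
  refine ⟨j, hkj, ?_⟩
  set V := ∑ i ∈ Finset.range k, S.term i
  have herror : |birkhoffSum T (S.potential - coboundary T V : C(X, ℝ)) j x| ≤ 2 := by
    have hj' : (j : ℝ) ≤ S.window k + 1 := by exact_mod_cast hj.trans (Nat.le_succ _)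
    calc |birkhoffSum T (S.potential - coboundary T V : C(X, ℝ)) j x|
      _ ≤ j * ‖S.potential - coboundary T V‖ := abs_birkhoffSum_le _ j x
      _ ≤ (S.window k + 1) * (2 / (S.window k + 1)) := by
          gcongr
          exact S.norm_potential_sub_coboundary_sum_term_le k
      _ = 2 := by field_simp
  rw [ContinuousMap.coe_sub, birkhoffSum_sub, birkhoffSum_coboundary] at herror
  rw [abs_le] at *
  constructor <;> linarith

end Potential

section AlmostEverywhere

variable [IsFiniteMeasure μ] (S : TransferSeries T μ)

lemma ae_summable_term : ∀ᵐ x ∂μ, Summable fun k => S.term k x := by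
  have hsum : ∑' k, μ {x | S.term k x ≠ 0} ≠ ⊤ := by
    refine ne_top_of_le_ne_top
      (summable_geometric_two.tsum_ofReal_ne_top) (ENNReal.tsum_le_tsum fun k => ?_)
    rw [← ofReal_measureReal]
    exact ENNReal.ofReal_le_ofReal (S.measureReal_term_ne_zero_le k)
  filter_upwards [ae_eventually_notMem hsum] with x hx
  rw [← Nat.cofinite_eq_atTop, eventually_cofinite] at hx
  exact summable_of_hasFiniteSupport
    (by simpa [Function.HasFiniteSupport, Function.support] using hx)

lemma ae_potential_eq [CompactSpace X] (hT : MeasurePreserving T μ μ) :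
    ∀ᵐ x ∂μ, S.potential x = S.transfer x - S.transfer (T x) := by
  filter_upwards [S.ae_summable_term, hT.quasiMeasurePreserving.ae S.ae_summable_term]
    with x hx hTx
  rw [potential, ← ContinuousMap.tsum_apply S.summable_coboundary_term]
  exact hx.tsum_sub hTx

lemma integrable_exp_neg_mul_transfer [OpensMeasurableSpace X] {β : ℝ} (hβ : 0 ≤ β) :
    Integrable (fun x => Real.exp (-β * S.transfer x)) μ := by
  have := S.measurable_transfer
  refine Integrable.of_bound (by fun_prop) 1 (Eventually.of_forall fun x => ?_)
  simpa using mul_nonneg hβ (S.transfer_nonneg x)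

lemma not_integrable_exp_mul_transfer {β : ℝ} (hβ : 0 < β) :
    ¬ Integrable (fun x => Real.exp (β * S.transfer x)) μ := by
  intro h_int
  obtain ⟨k, hk⟩ := exists_nat_gt (max (∫ x, Real.exp (β * S.transfer x) ∂μ) β⁻¹)
  obtain ⟨hk_int, hkβ⟩ := max_lt_iff.1 hk
  have hcoeff : (k + 1 : ℝ)⁻¹ ≤ β := inv_le_of_inv_le₀ hβ (by linarith)
  refine hk_int.not_ge ((S.le_integral_exp_term k).trans (integral_mono_of_nonneg
    (Eventually.of_forall fun x => Real.exp_nonneg _) h_int ?_))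
  filter_upwards [S.ae_summable_term] with x hx
  have hterm : S.term k x ≤ S.transfer x := hx.le_tsum k fun i _ => S.term_nonneg i x
  have := S.term_nonneg k x
  gcongr

end AlmostEverywhere

end TransferSeries

/-! ### Uniquely ergodic systems -/

section UniquelyErgodic

variable {X : Type*} [TopologicalSpace X] [CompactSpace X] [MeasurableSpace X] [BorelSpace X]
  {φ : X ≃ₜ X} {μ : Measure X} [IsProbabilityMeasure μ]

lemma IsInvariantMeasure.nullSingletonClass [HasOuterApproxClosed X] [T1Space X]
    (h : IsInvariantMeasure φ μ) (haper : Function.periodicPts φ = ∅) : NullSingletonClass μ :=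
  ⟨fun x => (h.isConformalMeasure_zero 0).measure_singleton_eq_zero continuous_zero (x := x)
    (by simp [haper]) (C := 0) (Frequently.of_forall fun n => by simp [birkhoffSum])⟩

lemma TransferSeries.exists_isConformalMeasure_potential [T2Space X]
    (S : TransferSeries (φ : C(X, X)) μ) (hφ : MeasurePreserving φ μ μ) (β : ℝ) :
    ∃ m, IsConformalMeasure φ S.potential β m :=
  exists_isConformalMeasure_of_tendsto S.tendsto_coboundary_sum_term fun _ =>
    ⟨_, isConformalMeasure_tilted hφ (Eventually.of_forall fun _ => rfl)
      (Continuous.integrable_of_hasCompactSupport (by fun_prop)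
        (HasCompactSupport.of_compactSpace _))⟩

end UniquelyErgodic

theorem stmt19_general {X : Type*} [TopologicalSpace X] [CompactSpace X]
    [TopologicalSpace.MetrizableSpace X] [MeasurableSpace X] [BorelSpace X] {φ : X ≃ₜ X}
    {μ : Measure X} (hμ : IsUniquelyErgodic φ μ)
    (hrec : ∀ x, MapClusterPt x atTop fun n => φ^[n] x) (haper : Function.periodicPts φ = ∅) :
    ∃ F : X → ℝ, Continuous F ∧
      (∀ β : ℝ, ∃ m : Measure X, IsConformalMeasure φ F β m) ∧
      (∀ β : ℝ, ∀ m : Measure X, IsConformalMeasure φ F β m → ∀ x : X, m {x} = 0) ∧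
      (∀ β : ℝ, 0 ≤ β → ∃! m : Measure X,
        IsConformalMeasure φ F β m ∧ IsErgodicMeasure φ m ∧
        ∃ ν : Measure X, IsProbabilityMeasure ν ∧ IsInvariantMeasure φ ν ∧ m ≪ ν ∧ ν ≪ m) ∧
      (∀ β : ℝ, β < 0 → ∀ m : Measure X, IsConformalMeasure φ F β m →
        ¬ ∃ ν : Measure X, IsProbabilityMeasure ν ∧ IsInvariantMeasure φ ν ∧ m ≪ ν ∧ ν ≪ m) := by
  have := hμ.isProbabilityMeasure
  have := hμ.isInvariantMeasure.nullSingletonClass haper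
  have hφ : MeasurePreserving φ μ μ := hμ.isInvariantMeasure.measurePreserving
  obtain ⟨S⟩ := TransferSeries.nonempty (T := (φ : C(X, X))) hφ hrec
  have hF := S.ae_potential_eq hφ
  have hrigid {β : ℝ} {m ν : Measure X} (hm : IsConformalMeasure φ S.potential β m)
      (hν : IsProbabilityMeasure ν) (hφν : IsInvariantMeasure φ ν) (hmν : m ≪ ν) :
      Integrable (fun x => Real.exp (-β * S.transfer x)) μ ∧
        m = μ.tilted fun x => -β * S.transfer x :=
    hm.integrable_exp_and_eq_tilted S.potential.continuous hμ.ergodic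
      (hμ.eq_of_isInvariantMeasure ν hν hφν ▸ hmν) S.measurable_transfer hF
  refine ⟨S.potential, S.potential.continuous, S.exists_isConformalMeasure_potential hφ,
    fun β m hm x => hm.measure_singleton_eq_zero S.potential.continuous (by simp [haper])
      (S.frequently_abs_birkhoffSum_potential_le x),
    fun β hβ => ?_, fun β hβ m hm ⟨ν, hν, hφν, hmν, _⟩ => ?_⟩
  · have h_int := S.integrable_exp_neg_mul_transfer hβ
    have hac := tilted_absolutelyContinuous μ fun x => -β * S.transfer x
    exact ⟨_, ⟨isConformalMeasure_tilted hφ hF h_int,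
      isErgodicMeasure_of_absolutelyContinuous hμ.ergodic hac, μ, inferInstance,
      hμ.isInvariantMeasure, hac, absolutelyContinuous_tilted h_int⟩,
      fun m ⟨hm, _, ν, hν, hφν, hmν, _⟩ => (hrigid hm hν hφν hmν).2⟩
  · exact S.not_integrable_exp_mul_transfer (neg_pos.2 hβ) (hrigid hm hν hφν hmν).1

/-! ### Rotations -/

lemma periodicPts_add_left_eq_empty {M : Type*} [AddMonoid M] [IsRightCancelAdd M] {a : M}
    (ha : addOrderOf a = 0) : Function.periodicPts (a + ·) = ∅ := by
  refine Set.eq_empty_of_forall_notMem fun x ⟨n, hn, hx⟩ => ?_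
  rw [Function.IsPeriodicPt, Function.IsFixedPt, add_left_iterate, add_eq_right] at hx
  exact addOrderOf_eq_zero_iff'.1 ha n hn hx

section Rotation

variable {G : Type*} [AddGroup G] [TopologicalSpace G] [IsTopologicalAddGroup G] [CompactSpace G]
  {a : G}

lemma mapClusterPt_iterate_addLeft (a x : G) :
    MapClusterPt x atTop fun n => (Homeomorph.addLeft a)^[n] x := by
  have hzero := (mapClusterPt_zero_atTop_nsmul a).continuousAt_comp
    (f := fun y => y + x) (by fun_prop)
  simpa [Function.comp_def, Homeomorph.coe_addLeft, add_left_iterate] using hzero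

variable [TopologicalSpace.MetrizableSpace G] [MeasurableSpace G] [BorelSpace G]

/-- The integral of a continuous function against the translate of `ν` by `t` depends continuously
on `t` and is constant along the dense orbit of `a`. -/
lemma IsInvariantMeasure.isAddLeftInvariant {ν : Measure G} [IsFiniteMeasure ν]
    (h : IsInvariantMeasure (Homeomorph.addLeft a) ν) (ha : DenseRange fun n : ℤ => n • a) :
    ν.IsAddLeftInvariant := by
  refine ⟨fun t => ext_of_forall_integral_eq_of_IsFiniteMeasure fun f => ?_⟩
  rw [integral_map (by fun_prop) (by fun_prop)]
  have hcont : Continuous fun t => ∫ x, f (t + x) ∂ν :=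
    continuous_of_dominated (bound := fun _ => ‖f‖) (fun t => by fun_prop)
      (fun t => Eventually.of_forall fun x => f.norm_coe_le_norm _) (by fun_prop)
      (Eventually.of_forall fun x => by fun_prop)
  refine congrFun ((denseRange_zsmul_iff_nsmul.1 ha).equalizer hcont continuous_const ?_) t
  ext n
  have hn := h.measurePreserving.iterate n
  rw [Homeomorph.coe_addLeft, add_left_iterate] at hn
  exact hn.integral_comp (Homeomorph.addLeft (n • a)).measurableEmbedding f

theorem isUniquelyErgodic_addLeft (ha : DenseRange fun n : ℤ => n • a) (μ : Measure G)
    [IsProbabilityMeasure μ] [μ.IsAddHaarMeasure] :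
    IsUniquelyErgodic (Homeomorph.addLeft a) μ where
  isProbabilityMeasure := inferInstance
  isInvariantMeasure B hB := (measurePreserving_add_left μ a).measure_preimage hB.nullMeasurableSet
  eq_of_isInvariantMeasure ν hν h := by
    have := h.isAddLeftInvariant ha
    have : ν.IsAddHaarMeasure := Measure.isAddHaarMeasure_of_isCompact_nonempty_interior ν
      Set.univ isCompact_univ (by simp) (by simp) (by simp)
    exact Measure.isAddHaarMeasure_eq_of_isProbabilityMeasure ν μ

end Rotation

theorem stmt19 (α : ℝ) (hα : Irrational α) :
    ∃ F : UnitAddCircle → ℝ, Continuous F ∧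
      (∀ β : ℝ, ∃ m : Measure UnitAddCircle,
        IsConformalMeasure (Homeomorph.addLeft ((α : UnitAddCircle))) F β m) ∧
      (∀ β : ℝ, ∀ m : Measure UnitAddCircle,
        IsConformalMeasure (Homeomorph.addLeft ((α : UnitAddCircle))) F β m →
          ∀ x : UnitAddCircle, m {x} = 0) ∧
      (∀ β : ℝ, 0 ≤ β → ∃! m : Measure UnitAddCircle,
        IsConformalMeasure (Homeomorph.addLeft ((α : UnitAddCircle))) F β m ∧
        IsErgodicMeasure (Homeomorph.addLeft ((α : UnitAddCircle))) m ∧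
        ∃ ν : Measure UnitAddCircle, IsProbabilityMeasure ν ∧
          IsInvariantMeasure (Homeomorph.addLeft ((α : UnitAddCircle))) ν ∧
          m ≪ ν ∧ ν ≪ m) ∧
      (∀ β : ℝ, β < 0 → ∀ m : Measure UnitAddCircle,
        IsConformalMeasure (Homeomorph.addLeft ((α : UnitAddCircle))) F β m →
          ¬ ∃ ν : Measure UnitAddCircle, IsProbabilityMeasure ν ∧
            IsInvariantMeasure (Homeomorph.addLeft ((α : UnitAddCircle))) ν ∧
            m ≪ ν ∧ ν ≪ m) := by
  have hdense : DenseRange fun n : ℤ => n • (α : UnitAddCircle) :=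
    AddCircle.denseRange_zsmul_coe_iff.2 (by simpa using hα)
  exact stmt19_general (isUniquelyErgodic_addLeft hdense AddCircle.haarAddCircle)
    (mapClusterPt_iterate_addLeft _)
    (periodicPts_add_left_eq_empty (AddCircle.denseRange_zsmul_iff.1 hdense))
end
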